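/- arXiv:2011.03033 — 2 statements merged into one kernel-verified Lean document; each statement's English description precedes it below -/
import Mathlib

section
/- Let D be a symmetric cycle in the hypercube graph H(t,2). The map sending a subset A of [t] to x(T_A,D) is a valuation on the Boolean lattice of subsets of [t]: for any two subsets A,B of [t], x(T_A,D) + x(T_B,D) = x(T_{A intersect B},D) + x(T_{A union B},D). -/
open Finset

noncomputable section

/-- Row vectors of `ℝ^t`. -/
abbrev Vec (t : ℕ) := Fin t → ℝ

/-- `T` is a vertex of the discrete hypercube `{1,-1}^t`. -/
def IsPMVertex {t : ℕ} (T : Vec t) : Prop := ∀ i, T i = 1 ∨ T i = -1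

/-- `T` is a vertex of the discrete hypercube `{0,1}^t`. -/
def Is01Vertex {t : ℕ} (T : Vec t) : Prop := ∀ i, T i = 0 ∨ T i = 1

open Classical in
/-- Hamming distance between two vectors. -/
def hamming {t : ℕ} (X Y : Vec t) : ℕ :=
  (Finset.univ.filter fun i => X i ≠ Y i).card

/-- The standard scalar product on `ℝ^t`. -/
def sprod {t : ℕ} (X Y : Vec t) : ℝ := ∑ i, X i * Y i

open Classical in
/-- The cardinality of the negative part `T⁻ = {e : T e = -1}` of `T`. -/
def negCard {t : ℕ} (T : Vec t) : ℕ :=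
  (Finset.univ.filter fun i => T i = -1).card

open Classical in
/-- The Hamming weight (number of coordinates equal to `1`) of a `0/1`-vector. -/
def hwt01 {t : ℕ} (T : Vec t) : ℕ :=
  (Finset.univ.filter fun i => T i = 1).card

/-- `D` (read as a `2t`-periodic sequence `D^0, D^1, …`) is a symmetric cycle in the
hypercube graph `H(t,2)` on the vertex set `{1,-1}^t`: all `D^k` are vertices,
consecutive members are adjacent (Hamming distance `1`), the `2t` members
`D^0, …, D^{2t-1}` are pairwise distinct, and `D^{k+t} = -D^k` for `0 ≤ k ≤ t-1`. -/
structure IsSymCycle (t : ℕ) (D : ℕ → Vec t) : Prop where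
  vertex : ∀ k, IsPMVertex (D k)
  periodic : ∀ k, D (k + 2 * t) = D k
  adj : ∀ k, hamming (D k) (D (k + 1)) = 1
  inj : ∀ k l, k < 2 * t → l < 2 * t → D k = D l → k = l
  symm : ∀ k, k ≤ t - 1 → D (k + t) = -(D k)

/-- `D` is a symmetric cycle in the hypercube graph on the vertex set `{0,1}^t`:
here `D^{k+t} = (1,…,1) - D^k` for `0 ≤ k ≤ t-1`. -/
structure IsSymCycle01 (t : ℕ) (D : ℕ → Vec t) : Prop where
  vertex : ∀ k, Is01Vertex (D k)
  periodic : ∀ k, D (k + 2 * t) = D k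
  adj : ∀ k, hamming (D k) (D (k + 1)) = 1
  inj : ∀ k l, k < 2 * t → l < 2 * t → D k = D l → k = l
  symm : ∀ k, k ≤ t - 1 → D (k + t) = (fun _ => 1) - D k

open Classical in
/-- The vertex sequence `V(D) = (D^0, …, D^{2t-1})` of a cycle, as a finset. -/
def VD (t : ℕ) (D : ℕ → Vec t) : Finset (Vec t) :=
  (Finset.range (2 * t)).image D

/-- `Q` is an inclusion-minimal subset of `V(D)` whose members sum to `T` (in `ℝ^t`). -/
def IsMinDecomp (t : ℕ) (D : ℕ → Vec t) (T : Vec t) (Q : Finset (Vec t)) : Prop :=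
  Q ⊆ VD t D ∧ (∑ q ∈ Q, q) = T ∧
    ∀ Q' : Finset (Vec t), Q' ⊆ VD t D → (∑ q ∈ Q', q) = T → ¬Q' ⊂ Q

/-- The vertex `T_S ∈ {1,-1}^t` whose negative part is `S`. -/
def topeOf (t : ℕ) (S : Finset (Fin t)) : Vec t := fun i => if i ∈ S then -1 else 1

/-- `x` is a coordinate vector of `T` w.r.t. `(D^0, …, D^{t-1})` with all
components in `{-1,0,1}`; by uniqueness this is the vector `x(T,D)`. -/
def IsXVec (t : ℕ) (D : ℕ → Vec t) (T : Vec t) (x : Fin t → ℝ) : Prop :=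
  (∀ i, x i = -1 ∨ x i = 0 ∨ x i = 1) ∧ T = ∑ i : Fin t, x i • D (i : ℕ)

open Classical in
/-- The `{0,1}`-decomposition equation
`T = -(|Q|-1)/2 • (1,…,1) + ∑_{q ∈ Q, q ≠ 0} q`. -/
def Decomp01 (t : ℕ) (T : Vec t) (Q : Finset (Vec t)) : Prop :=
  T = (-(((Q.card : ℝ) - 1) / 2)) • (fun _ => 1 : Vec t) +
    ∑ q ∈ Q.filter (fun q => q ≠ (0 : Vec t)), q

/-- `R^k` for `0 ≤ k ≤ t-1`: the all-ones vector with the first `k` coordinates negated. -/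
def Rvec (t : ℕ) (k : ℕ) : Vec t := fun i => if (i : ℕ) < k then -1 else 1

/-- The distinguished symmetric cycle `R` in `H(t,2)`:
`R^0 = (1,…,1)`, `R^s = {}_{-[s]}R^0` for `1 ≤ s ≤ t-1`, and `R^{k+t} = -R^k`. -/
def Rcyc (t : ℕ) (k : ℕ) : Vec t :=
  if k % (2 * t) < t then Rvec t (k % (2 * t)) else -(Rvec t (k % (2 * t) - t))

/-- `q(A) = ℓ`: an (automatically, the unique) inclusion-minimal subset of `V(R)`
summing to `T_A` has cardinality `ℓ`. -/
def qIs (t : ℕ) (A : Finset (Fin t)) (ℓ : ℕ) : Prop :=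
  ∃ Q : Finset (Vec t), IsMinDecomp t (Rcyc t) (topeOf t A) Q ∧ Q.card = ℓ

/-- `c(m;n) = binom(n-1, m-1)`, the number of compositions of `n` into `m` positive
parts (zero whenever `m = 0` or `n ≤ 0`). -/
def comp (m : ℕ) (n : ℤ) : ℕ :=
  if 1 ≤ m ∧ 1 ≤ n then ((n - 1).toNat).choose (m - 1) else 0

/-- The number of ternary Smirnov words (words with no two equal adjacent letters)
over the alphabet `(θ, α, β) = (0, 1, 2)` with Parikh vector `(k, i, j)`
(that is, `k` letters `θ`, `i` letters `α`, `j` letters `β`), starting with the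
letter `s'` and ending with the letter `s''`. -/
def Tm (s' s'' : Fin 3) (k i j : ℕ) : ℕ :=
  Set.ncard { w : List (Fin 3) | List.Chain' (· ≠ ·) w ∧
    w.count 0 = k ∧ w.count 1 = i ∧ w.count 2 = j ∧
    w.head? = some s' ∧ w.getLast? = some s'' }

/-- The number of Smirnov words over the alphabet `(θ, α, β, γ) = (0, 1, 2, 3)` with
Parikh vector `(k, i, j, h)`, starting with `s'` and ending with `s''`. -/
def Fr (s' s'' : Fin 4) (k i j h : ℕ) : ℕ :=
  Set.ncard { w : List (Fin 4) | List.Chain' (· ≠ ·) w ∧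
    w.count 0 = k ∧ w.count 1 = i ∧ w.count 2 = j ∧ w.count 3 = h ∧
    w.head? = some s' ∧ w.getLast? = some s'' }

/-!
Along `D^0, …, D^t = -D^0` every coordinate changes sign, and each step changes one coordinate only.
Hence every standard basis vector is a multiple of some `D^k - D^{k+1}`, so the `t` vectors
`D^0, …, D^{t-1}` span `ℝ^t` and form a basis. Since `T_A + T_B = T_{A∩B} + T_{A∪B}` holds
coordinatewise, the same relation holds between the coordinate vectors in this basis.
-/

theorem exists_lt_apply_ne_apply_succ {α : Type*} {f : ℕ → α} {n : ℕ} (h : f 0 ≠ f n) :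
    ∃ k < n, f k ≠ f (k + 1) := by
  by_contra! hconst
  have hzero : ∀ k ≤ n, f 0 = f k := by
    intro k
    induction k with
    | zero => exact fun _ => rfl
    | succ k ih => exact fun hk => (ih (by omega)).trans (hconst k hk)
  exact h (hzero n le_rfl)

section HammingPath

variable {K ι : Type*} [Fintype ι] [DecidableEq K]

theorem eq_of_hammingDist_le_one {x y : ι → K} (h : hammingDist x y ≤ 1) {i j : ι}
    (hi : x i ≠ y i) (hj : j ≠ i) : x j = y j := by
  by_contra hne
  exact hj (Finset.card_le_one.mp h j (by simpa using hne) i (by simpa using hi))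

variable [DivisionRing K]

theorem single_one_mem_of_hammingDist_le_one [DecidableEq ι] {W : Submodule K (ι → K)}
    {x y : ι → K} (hx : x ∈ W) (hy : y ∈ W) (h : hammingDist x y ≤ 1) {i : ι} (hi : x i ≠ y i) :
    Pi.single i 1 ∈ W := by
  have single_eq : Pi.single i 1 = (x i - y i)⁻¹ • (x - y) := by
    ext j
    rcases eq_or_ne j i with rfl | hj
    · simp [inv_mul_cancel₀ (sub_ne_zero.mpr hi)]
    · simp [hj, eq_of_hammingDist_le_one h hi hj]
  rw [single_eq]
  exact W.smul_mem _ (W.sub_mem hx hy)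

theorem eq_top_of_hammingDist_le_one {W : Submodule K (ι → K)} {v : ℕ → ι → K} {n : ℕ}
    (hmem : ∀ k ≤ n, v k ∈ W) (hstep : ∀ k < n, hammingDist (v k) (v (k + 1)) ≤ 1)
    (hne : ∀ i, v 0 i ≠ v n i) : W = ⊤ := by
  classical
  rw [eq_top_iff, ← (Pi.basisFun K ι).span_eq, Submodule.span_le]
  rintro _ ⟨i, rfl⟩
  obtain ⟨k, hk, hki⟩ := exists_lt_apply_ne_apply_succ (f := fun k => v k i) (hne i)
  rw [Pi.basisFun_apply]
  exact single_one_mem_of_hammingDist_le_one (hmem k hk.le) (hmem (k + 1) hk) (hstep k hk) hki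

theorem linearIndependent_of_hammingDist_le_one {v : ℕ → ι → K} {n : ℕ}
    (hn : n = Fintype.card ι) (hstep : ∀ k < n, hammingDist (v k) (v (k + 1)) ≤ 1)
    (hne : ∀ i, v 0 i ≠ v n i)
    (hlast : v n ∈ Submodule.span K (Set.range fun k : Fin n => v k)) :
    LinearIndependent K fun k : Fin n => v k := by
  have hmem : ∀ k ≤ n, v k ∈ Submodule.span K (Set.range fun k : Fin n => v k) := by
    intro k hk
    rcases hk.lt_or_eq with hlt | rfl
    · exact Submodule.subset_span ⟨⟨k, hlt⟩, rfl⟩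
    · exact hlast
  exact linearIndependent_of_top_le_span_of_card_eq_finrank
    (eq_top_of_hammingDist_le_one hmem hstep hne).ge (by simp [hn])

end HammingPath

theorem hamming_eq_hammingDist {t : ℕ} (X Y : Vec t) : hamming X Y = hammingDist X Y := by
  unfold hamming hammingDist
  congr

theorem IsPMVertex.apply_ne_zero {t : ℕ} {T : Vec t} (hT : IsPMVertex T) (i : Fin t) :
    T i ≠ 0 := by
  rcases hT i with h | h <;> norm_num [h]

namespace IsSymCycle

variable {t : ℕ} {D : ℕ → Vec t}

theorem pos (hD : IsSymCycle t D) : 0 < t := by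
  rcases Nat.eq_zero_or_pos t with rfl | ht
  · simpa [hamming] using hD.adj 0
  · exact ht

theorem apply_eq_neg_apply_zero (hD : IsSymCycle t D) : D t = -D 0 := by
  simpa using hD.symm 0 (Nat.zero_le _)

theorem linearIndependent (hD : IsSymCycle t D) :
    LinearIndependent ℝ fun k : Fin t => D k := by
  refine linearIndependent_of_hammingDist_le_one (Fintype.card_fin t).symm ?_ ?_ ?_
  · intro k _
    rw [← hamming_eq_hammingDist, hD.adj k]
  · intro i
    rw [hD.apply_eq_neg_apply_zero]
    exact self_ne_neg.mpr ((hD.vertex 0).apply_ne_zero i)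
  · rw [hD.apply_eq_neg_apply_zero]
    exact Submodule.neg_mem _ (Submodule.subset_span ⟨⟨0, hD.pos⟩, rfl⟩)

end IsSymCycle

theorem topeOf_add_topeOf {t : ℕ} (A B : Finset (Fin t)) :
    topeOf t A + topeOf t B = topeOf t (A ∩ B) + topeOf t (A ∪ B) := by
  ext i
  by_cases hA : i ∈ A <;> by_cases hB : i ∈ B <;> simp [topeOf, hA, hB]

theorem stmt1_general {t : ℕ} {ι : Type*} [Fintype ι] {v : ι → Vec t}
    (hv : LinearIndependent ℝ v) {A B : Finset (Fin t)} {xA xB xI xU : ι → ℝ}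
    (hA : topeOf t A = ∑ i, xA i • v i) (hB : topeOf t B = ∑ i, xB i • v i)
    (hI : topeOf t (A ∩ B) = ∑ i, xI i • v i) (hU : topeOf t (A ∪ B) = ∑ i, xU i • v i) :
    xA + xB = xI + xU := by
  apply hv.fintypeLinearCombination_injective
  simp only [map_add, Fintype.linearCombination_apply]
  rw [← hA, ← hB, ← hI, ← hU, topeOf_add_topeOf]

/-- `A ↦ x(T_A, D)` is a valuation on the Boolean lattice:
`x(T_A,D) + x(T_B,D) = x(T_{A∩B},D) + x(T_{A∪B},D)`. -/
theorem stmt1 (t : ℕ) (ht : 3 ≤ t) (D : ℕ → Vec t) (hD : IsSymCycle t D)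
    (A B : Finset (Fin t)) (xA xB xI xU : Fin t → ℝ)
    (hA : IsXVec t D (topeOf t A) xA) (hB : IsXVec t D (topeOf t B) xB)
    (hI : IsXVec t D (topeOf t (A ∩ B)) xI) (hU : IsXVec t D (topeOf t (A ∪ B)) xU) :
    xA + xB = xI + xU := by
  exact stmt1_general hD.linearIndependent hA.2 hB.2 hI.2 hU.2
end
end

section
/- Let D be a symmetric cycle in the hypercube graph H(t,2) and let T be any vertex of {1,-1}^t. Then sum_{Q in Q(T,D)} d(T,Q) = -|T^-| + sum_{Q in Q(T,D)} |Q^-|, where d denotes Hamming distance. -/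
open Finset

noncomputable section

/-!
For vertices `X` and `Y`, `2 d(X, Y) = t - ⟨X, Y⟩`, so the sum of the distances from `X` to the
members of a family of vertices depends only on the size and the vector sum of the family. As
`|X⁻| = d((1, …, 1), X)`, both sums in the theorem have this form, with `X = T` and
`X = (1, …, 1)`; their difference is read off from `⟨T, T⟩ = t`.
-/

lemma sprod_sum {t : ℕ} {ι : Type*} (X : Vec t) (s : Finset ι) (q : ι → Vec t) :
    sprod X (∑ j ∈ s, q j) = ∑ j ∈ s, sprod X (q j) :=
  dotProduct_sum X s q

namespace IsPMVertex

variable {t : ℕ} {X Y : Vec t}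

lemma one : IsPMVertex (1 : Vec t) := fun _ => Or.inl rfl

lemma sprod_self (hX : IsPMVertex X) : sprod X X = t := by
  have coordinatewise (i : Fin t) : X i * X i = 1 := mul_self_eq_one_iff.mpr (hX i)
  simp [sprod, coordinatewise]

lemma two_mul_hamming (hX : IsPMVertex X) (hY : IsPMVertex Y) :
    2 * (hamming X Y : ℝ) = t - sprod X Y := by
  have coordinatewise (i : Fin t) : 2 * (if X i ≠ Y i then 1 else 0 : ℝ) = 1 - X i * Y i := by
    rcases hX i with hXi | hXi <;> rcases hY i with hYi | hYi <;> rw [hXi, hYi] <;> norm_num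
  calc 2 * (hamming X Y : ℝ)
      = ∑ i, 2 * (if X i ≠ Y i then 1 else 0 : ℝ) := by
        rw [hamming, natCast_card_filter, mul_sum]
    _ = ∑ i, (1 - X i * Y i) := sum_congr rfl fun i _ => coordinatewise i
    _ = t - sprod X Y := by simp [sprod]

lemma negCard_eq_hamming_one (hX : IsPMVertex X) : negCard X = hamming 1 X := by
  refine congrArg card (filter_congr fun i _ => ?_)
  rcases hX i with hXi | hXi <;> rw [hXi] <;> norm_num

lemma two_mul_sum_hamming {ι : Type*} (hX : IsPMVertex X) {s : Finset ι} {q : ι → Vec t}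
    (hq : ∀ j ∈ s, IsPMVertex (q j)) :
    2 * ∑ j ∈ s, (hamming X (q j) : ℝ) = s.card * t - sprod X (∑ j ∈ s, q j) := by
  rw [mul_sum, sum_congr rfl fun j hj => hX.two_mul_hamming (hq j hj), sum_sub_distrib,
    sum_const, nsmul_eq_mul, sprod_sum]

end IsPMVertex

lemma IsSymCycle.isPMVertex_of_mem_VD {t : ℕ} {D : ℕ → Vec t} (hD : IsSymCycle t D) {q : Vec t}
    (hq : q ∈ VD t D) : IsPMVertex q := by
  obtain ⟨k, -, rfl⟩ := mem_image.mp hq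
  exact hD.vertex k

theorem stmt5_general {t : ℕ} {ι : Type*} {T : Vec t} (hT : IsPMVertex T) {s : Finset ι}
    {q : ι → Vec t} (hq : ∀ j ∈ s, IsPMVertex (q j)) (hsum : ∑ j ∈ s, q j = T) :
    (∑ j ∈ s, (hamming T (q j) : ℤ)) = -(negCard T : ℤ) + ∑ j ∈ s, (negCard (q j) : ℤ) := by
  have sum_hamming : 2 * ∑ j ∈ s, (hamming T (q j) : ℝ) = s.card * t - t := by
    rw [hT.two_mul_sum_hamming hq, hsum, hT.sprod_self]
  have sum_negCard : 2 * ∑ j ∈ s, (negCard (q j) : ℝ) = s.card * t - sprod 1 T := by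
    rw [sum_congr rfl fun j hj => congrArg Nat.cast (hq j hj).negCard_eq_hamming_one,
      IsPMVertex.one.two_mul_sum_hamming hq, hsum]
  have negCard_T : 2 * (negCard T : ℝ) = t - sprod 1 T := by
    rw [hT.negCard_eq_hamming_one, IsPMVertex.one.two_mul_hamming hT]
  have real_identity : ∑ j ∈ s, (hamming T (q j) : ℝ) =
      -(negCard T : ℝ) + ∑ j ∈ s, (negCard (q j) : ℝ) := by
    linarith
  exact_mod_cast real_identity

/-- `∑_{Q ∈ Q(T,D)} d(T,Q) = -|T⁻| + ∑_{Q ∈ Q(T,D)} |Q⁻|`. -/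
theorem stmt5 (t : ℕ) (ht : 3 ≤ t) (D : ℕ → Vec t) (hD : IsSymCycle t D)
    (T : Vec t) (hT : IsPMVertex T)
    (Q : Finset (Vec t)) (hQ : IsMinDecomp t D T Q) :
    (∑ q ∈ Q, (hamming T q : ℤ)) = -(negCard T : ℤ) + ∑ q ∈ Q, (negCard q : ℤ) :=
  stmt5_general hT (fun _ hq => hD.isPMVertex_of_mem_VD (hQ.1 hq)) hQ.2.1
end
end
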